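/- Fix P ∈ ℙ^n, zero-dimensional closed subschemes A, B ⊂ ℙ^m with A ≠ B, P ∈ ⟨ν_d(A)⟩ ∩ ⟨ν_d(B)⟩, P ∉ ⟨ν_d(A')⟩ for every A' ⊊ A, P ∉ ⟨ν_d(B')⟩ for every B' ⊊ B, with B reduced; assume there are a positive integer t ≤ d and a degree-t hypersurface D ⊂ ℙ^m with h^1(I_{Res_D(A∪B)}(d−t)) = 0, and set E := B ∖ (B ∩ D). Then ⟨ν_d(A ∩ D)⟩ ∩ ⟨ν_d(B ∩ D)⟩ ≠ ∅, and there is a point Q ∈ ⟨ν_d(A ∩ D)⟩ ∩ ⟨ν_d(B ∩ D)⟩ such that P ∈ ⟨{Q} ∪ ν_d(E)⟩. -/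

import Mathlib

open scoped LinearAlgebra.Projectivization

noncomputable section

/-- The polynomial ring in `m+1` variables over `K`: homogeneous coordinate ring of `ℙ^m`. -/
abbrev PR (K : Type) [Field K] (m : ℕ) : Type := MvPolynomial (Fin (m+1)) K

/-- The space of degree-`d` forms in `m+1` variables. -/
abbrev Hd (K : Type) [Field K] (m d : ℕ) : Submodule K (PR K m) :=
  MvPolynomial.homogeneousSubmodule (Fin (m+1)) K d

/-- Projective `m`-space over `K`. -/
abbrev Pm (K : Type) [Field K] (m : ℕ) := ℙ K (Fin (m+1) → K)

/-- The target projective space `ℙ^n`, `n = C(m+d,m) - 1`, of the degree-`d` Veronese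
embedding, realized as the projectivization of the dual of the space of degree-`d` forms
(the space of degree-`d` symmetric tensors). -/
abbrev PN (K : Type) [Field K] (m d : ℕ) := ℙ K (Module.Dual K (Hd K m d))

variable {K : Type} [Field K] {m : ℕ}

/-- Hilbert function of `R/I` in degree `t`. -/
def hilbQ (I : Ideal (PR K m)) (t : ℕ) : ℕ :=
  Module.finrank K ((Hd K m t).map (Ideal.Quotient.mkₐ K I).toLinearMap)

/-- The degree (length) of the projective scheme defined by `I`: the eventual value of the
Hilbert function of `R/I`. -/
def idealDeg (I : Ideal (PR K m)) : ℕ := Filter.limsup (fun t => hilbQ I t) Filter.atTop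

/-- `h^1(𝓘_Z(d))` for the zero-dimensional scheme `Z` with (saturated) ideal `I`:
it equals `deg Z - dim (R/I)_d`. -/
def h1I (I : Ideal (PR K m)) (d : ℕ) : ℕ := idealDeg I - hilbQ I d

/-- An ideal is homogeneous. -/
def IsHomogI (I : Ideal (PR K m)) : Prop :=
  ∀ f ∈ I, ∀ n : ℕ, MvPolynomial.homogeneousComponent n f ∈ I

/-- An ideal is saturated with respect to the irrelevant maximal ideal. -/
def IsSatI (I : Ideal (PR K m)) : Prop :=
  ∀ f : PR K m, (∀ i, MvPolynomial.X i * f ∈ I) → f ∈ I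

/-- A closed subscheme of `ℙ^m`, given by its saturated homogeneous ideal. -/
structure PSub (K : Type) [Field K] (m : ℕ) where
  I : Ideal (PR K m)
  homog : IsHomogI I
  sat : IsSatI I

/-- A (closed sub)scheme is zero-dimensional iff the Hilbert function of `R/I` is bounded. -/
def IsZeroDimI (I : Ideal (PR K m)) : Prop := ∃ C, ∀ t, hilbQ I t ≤ C

/-- A polynomial vanishes at a projective point (every homogeneous component vanishes
at a representative). -/
def vanishesAt (f : PR K m) (a : Pm K m) : Prop :=
  ∀ n : ℕ, MvPolynomial.eval a.rep (MvPolynomial.homogeneousComponent n f) = 0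

/-- Zero locus of an ideal in `ℙ^m`. -/
def pzeroLocus (I : Ideal (PR K m)) : Set (Pm K m) := {a | ∀ f ∈ I, vanishesAt f a}

/-- The (saturated) homogeneous ideal of a set of points of `ℙ^m`. -/
def idealOfSet (S : Set (Pm K m)) : Ideal (PR K m) :=
  Ideal.span {f : PR K m | (∃ n, f.IsHomogeneous n) ∧ ∀ a ∈ S, MvPolynomial.eval a.rep f = 0}

/-- Saturation of a homogeneous ideal: the smallest saturated homogeneous ideal containing it. -/
def satIdeal (J : Ideal (PR K m)) : Ideal (PR K m) := sInf {J' | J ≤ J' ∧ IsHomogI J' ∧ IsSatI J'}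

/-- The scheme defined by the (saturated) ideal `I` is reduced. -/
def IsReducedI (I : Ideal (PR K m)) : Prop := I = idealOfSet (pzeroLocus I)

/-- Connected component of a zero-dimensional scheme at a point `a`: the largest subscheme
supported at `a`, i.e. the `a`-primary component. -/
def componentAt (I : Ideal (PR K m)) (a : Pm K m) : Ideal (PR K m) :=
  sInf {J | I ≤ J ∧ IsHomogI J ∧ IsSatI J ∧ pzeroLocus J ⊆ {a}}

/-- Residual scheme of `Z` with respect to the hypersurface `f = 0`: the colon ideal `(I_Z : f)`. -/
def resIdeal (I : Ideal (PR K m)) (f : PR K m) : Ideal (PR K m) :=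
  Submodule.colon I (Ideal.span {f})

/-- Degree of the scheme-theoretic intersection of the subschemes defined by `I` and `J`. -/
def interDeg (I J : Ideal (PR K m)) : ℕ := idealDeg (I ⊔ J)

/-- The degree-`d` Veronese image of a vector `v`: the evaluation-at-`v` functional on
degree-`d` forms. -/
def nu (d : ℕ) (v : Fin (m+1) → K) : Module.Dual K (Hd K m d) :=
  (MvPolynomial.aeval v).toLinearMap ∘ₗ (Hd K m d).subtype

/-- The linear span of the Veronese image `ν_d(S)` of a set `S` of points of `ℙ^m`. -/
def dualSpan (d : ℕ) (S : Set (Pm K m)) : Submodule K (Module.Dual K (Hd K m d)) :=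
  Submodule.span K ((fun a => nu d a.rep) '' S)

/-- The linear span `⟨ν_d(Z)⟩` of the Veronese image of the subscheme with ideal `I`:
the annihilator of the degree-`d` part of `I`. -/
def schemeSpanSub (I : Ideal (PR K m)) (d : ℕ) : Submodule K (Module.Dual K (Hd K m d)) where
  carrier := {φ | ∀ f : Hd K m d, (f : PR K m) ∈ I → φ f = 0}
  add_mem' := by
    intro a b ha hb f hf
    simp [LinearMap.add_apply, ha f hf, hb f hf]
  zero_mem' := by intro f hf; simp
  smul_mem' := by
    intro c a ha f hf
    simp [LinearMap.smul_apply, ha f hf]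

/-- `P ∈ ⟨ν_d(Z)⟩`, for `Z` the subscheme with ideal `I`. -/
def inSpanI (I : Ideal (PR K m)) (d : ℕ) (P : PN K m d) : Prop := P.rep ∈ schemeSpanSub I d

/-- `P ∈ ⟨ν_d(S)⟩` for a set `S` of points of `ℙ^m`. -/
def inSpanSet (d : ℕ) (S : Set (Pm K m)) (P : PN K m d) : Prop := P.rep ∈ dualSpan d S

/-- `L` is a linear subspace of `ℙ^m`. -/
def IsLinearSub (L : Set (Pm K m)) : Prop :=
  ∃ W : Submodule K (Fin (m+1) → K), L = {a | a.submodule ≤ W}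

/-- `L` is a line of `ℙ^m`. -/
def IsLine (L : Set (Pm K m)) : Prop :=
  ∃ W : Submodule K (Fin (m+1) → K), Module.finrank K W = 2 ∧ L = {a | a.submodule ≤ W}

/-- `L` is a plane of `ℙ^m`. -/
def IsPlane (L : Set (Pm K m)) : Prop :=
  ∃ W : Submodule K (Fin (m+1) → K), Module.finrank K W = 3 ∧ L = {a | a.submodule ≤ W}

/-- `J` is the (saturated homogeneous) ideal of a conic of `ℙ^m`: a degree-2 curve contained
in a plane (possibly reducible). -/
def IsConic (J : Ideal (PR K m)) : Prop :=
  ∃ (W : Submodule K (Fin (m+1) → K)) (q : PR K m),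
    Module.finrank K W = 3 ∧ q.IsHomogeneous 2 ∧
    q ∉ idealOfSet {a : Pm K m | a.submodule ≤ W} ∧
    J = satIdeal (idealOfSet {a : Pm K m | a.submodule ≤ W} ⊔ Ideal.span {q})

/-- The algebra of polynomial functions on a `K`-vector space. -/
def polyFunctions (K V : Type) [Field K] [AddCommGroup V] [Module K V] : Subalgebra K (V → K) :=
  Algebra.adjoin K {g : V → K | ∃ φ : V →ₗ[K] K, g = ⇑φ}

/-- Zariski closure of a subset of a projective space. -/
def zClosure {V : Type} [AddCommGroup V] [Module K V] (T : Set (ℙ K V)) : Set (ℙ K V) :=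
  {P | ∀ F ∈ polyFunctions K V, (∀ Q ∈ T, ∀ c : K, F (c • Q.rep) = 0) →
    ∀ c : K, F (c • P.rep) = 0}

/-- The Veronese variety `X_{m,d} = ν_d(ℙ^m)` as a subset of `PN K m d`. -/
def XSet (K : Type) [Field K] (m d : ℕ) : Set (PN K m d) :=
  {Q | ∃ a : Pm K m, Q.submodule = Submodule.span K {nu d a.rep}}

/-- The image `ν_d(S)` of a set of points of `ℙ^m`, as a subset of `PN K m d`. -/
def nuSet (d : ℕ) (S : Set (Pm K m)) : Set (PN K m d) :=
  {Q | ∃ a ∈ S, Q.submodule = Submodule.span K {nu d a.rep}}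

/-- The rank of a point `P` of `PN` with respect to a subset `Y ⊆ PN`. -/
def rankWrt {m d : ℕ} (Y : Set (PN K m d)) (P : PN K m d) : ℕ :=
  sInf {r | ∃ S : Finset (PN K m d), ↑S ⊆ Y ∧ S.card = r ∧
    P.rep ∈ Submodule.span K (Projectivization.rep '' (S : Set (PN K m d)))}

/-- The `s`-th secant variety of `Y ⊆ PN`: the Zariski closure of the union of the spans
of `s` points of `Y`. -/
def secantWrt {m d : ℕ} (Y : Set (PN K m d)) (s : ℕ) : Set (PN K m d) :=
  zClosure {Q | ∃ S : Finset (PN K m d), ↑S ⊆ Y ∧ S.card ≤ s ∧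
    Q.rep ∈ Submodule.span K (Projectivization.rep '' (S : Set (PN K m d)))}

/-- The border rank of `P` with respect to `Y ⊆ PN`. -/
def brankWrt {m d : ℕ} (Y : Set (PN K m d)) (P : PN K m d) : ℕ :=
  sInf {s | 0 < s ∧ P ∈ secantWrt Y s}

/-- Symmetric rank. -/
def srank {m : ℕ} (d : ℕ) (P : PN K m d) : ℕ := rankWrt (XSet K m d) P

/-- Border rank. -/
def brank {m : ℕ} (d : ℕ) (P : PN K m d) : ℕ := brankWrt (XSet K m d) P

/-- Cactus rank: minimal degree of a zero-dimensional closed subscheme `E ⊂ ℙ^m` with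
`P ∈ ⟨ν_d(E)⟩`. -/
def crank {m : ℕ} (d : ℕ) (P : PN K m d) : ℕ :=
  sInf {c | ∃ Z : PSub K m, IsZeroDimI Z.I ∧ idealDeg Z.I = c ∧ inSpanI Z.I d P}

/-- `σ_{s,r}(X_{m,d})`. -/
def sigmaSet (K : Type) [Field K] (m d s r : ℕ) : Set (PN K m d) :=
  {P | brank d P = s ∧ srank d P = r}

/-- A property `Φ` holds for a general `k`-tuple of points of the linear subspace of `ℙ^m`
determined by `W`. -/
def GenerallyOn (W : Submodule K (Fin (m+1) → K)) (k : ℕ)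
    (Φ : (Fin k → Pm K m) → Prop) : Prop :=
  ∃ w : Fin 3 → W, Submodule.span K (Set.range fun j => (w j : Fin (m+1) → K)) = W ∧
    ∃ F : MvPolynomial (Fin k × Fin 3) K, F ≠ 0 ∧
      ∀ c : Fin k → Fin 3 → K,
        MvPolynomial.eval (fun p => c p.1 p.2) F ≠ 0 →
        ∀ e : Fin k → Pm K m,
          (∀ i, (e i).submodule = Submodule.span K {∑ j, c i j • (w j : Fin (m+1) → K)}) → Φ e

end

/-!
Let `R` be the residual scheme of `A ∪ B` with respect to `D = {f = 0}` and `e = d - t`. Since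
`B` is reduced, `P = ψ + χ` with `ψ` supported on the points of `B` off `D` and `χ` on those in
`D`. Contraction by `f` kills `χ` and rescales the points of `ψ`, so it sends `P` and `ψ` to the
same functional, which lies in the spans of `E` and of the residual scheme of `A`, both contained
in `R`. As `h^1(I_R(e)) = 0`, spans of subschemes of `R` in degree `e` intersect as the schemes
themselves do, so the points of `ψ` lie on `A`. Hence `χ = P - ψ` lies in `⟨ν_d(A)⟩ ∩ ⟨ν_d(B)⟩`
and is killed by `f`. The vanishing of `h^1(I_R(e))` also makes every degree-`d` form vanishing on
`A ∩ D` the sum of one vanishing on `A` and a multiple of `f`, so `χ ∈ ⟨ν_d(A ∩ D)⟩`, and likewise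
for `B`. If `χ` were zero, `P` would be in the span of points common to `A` and `B`, and minimality
would force `A = B`. So `Q = [χ]` is the required point.
-/

noncomputable section Projective

open MvPolynomial

attribute [local instance] MvPolynomial.gradedAlgebra

variable {K : Type} [Field K] {m d e k n t : ℕ}

theorem homogeneousComponent_mul_of_isHomogeneous {f : PR K m} (hf : f.IsHomogeneous t) (k : ℕ)
    (g : PR K m) : homogeneousComponent (t + k) (f * g) = f * homogeneousComponent k g := by
  have h := DirectSum.coe_decompose_mul_add_of_left_mem (homogeneousSubmodule (Fin (m + 1)) K)
    (j := k) (b := g) hf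
  exact ((decomposition.decompose'_apply _ _).symm.trans h).trans
    (congrArg (f * ·) (decomposition.decompose'_apply _ _))

theorem IsHomogI.isHomogeneous {I : Ideal (PR K m)} (hI : IsHomogI I) :
    I.IsHomogeneous (homogeneousSubmodule (Fin (m + 1)) K) := by
  intro n f hf
  convert hI f hf n
  exact decomposition.decompose'_apply f n

theorem isHomogI_idealOfSet (S : Set (Pm K m)) : IsHomogI (idealOfSet S) := fun _ hf n ↦
  homogeneousComponent_mem_of_mem (Ideal.homogeneous_span _ _ fun _ hx ↦ hx.1) hf n

theorem eval_eq_zero_of_vanishesAt {f : PR K m} {p : Pm K m} (h : vanishesAt f p) :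
    eval p.rep f = 0 := by
  rw [← sum_homogeneousComponent f, map_sum]
  exact Finset.sum_eq_zero fun n _ ↦ h n

theorem vanishesAt_iff_eval_eq_zero {f : PR K m} (hf : f.IsHomogeneous n) (p : Pm K m) :
    vanishesAt f p ↔ eval p.rep f = 0 := by
  refine ⟨eval_eq_zero_of_vanishesAt, fun h k ↦ ?_⟩
  rw [homogeneousComponent_of_mem hf]
  split_ifs
  exacts [h, map_zero _]

theorem mem_idealOfSet {S : Set (Pm K m)} {f : PR K m} :
    f ∈ idealOfSet S ↔ ∀ p ∈ S, vanishesAt f p := by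
  refine ⟨fun hf p hp n ↦ ?_, fun hf ↦ ?_⟩
  · have hle : idealOfSet S ≤ RingHom.ker (eval p.rep) := Ideal.span_le.2 fun g hg ↦ hg.2 p hp
    exact hle (isHomogI_idealOfSet S f hf n)
  · rw [← sum_homogeneousComponent f]
    exact Ideal.sum_mem _ fun n _ ↦ Ideal.subset_span
      ⟨⟨n, homogeneousComponent_isHomogeneous n f⟩, fun p hp ↦ hf p hp n⟩

theorem pzeroLocus_antitone {I J : Ideal (PR K m)} (h : I ≤ J) : pzeroLocus J ⊆ pzeroLocus I :=
  fun _ hp g hg ↦ hp g (h hg)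

theorem le_idealOfSet_iff {I : Ideal (PR K m)} {S : Set (Pm K m)} :
    I ≤ idealOfSet S ↔ S ⊆ pzeroLocus I :=
  ⟨fun h _ hp _ hf ↦ mem_idealOfSet.1 (h hf) _ hp, fun h _ hf ↦ mem_idealOfSet.2 fun _ hp ↦
    h hp _ hf⟩

theorem mem_pzeroLocus_span_singleton {f : PR K m} (hf : f.IsHomogeneous t) {p : Pm K m} :
    p ∈ pzeroLocus (Ideal.span {f}) ↔ eval p.rep f = 0 := by
  rw [← Set.singleton_subset_iff, ← le_idealOfSet_iff, Ideal.span_singleton_le_iff_mem,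
    mem_idealOfSet]
  simp only [Set.mem_singleton_iff, forall_eq, vanishesAt_iff_eval_eq_zero hf]

theorem IsHomogI.mem_pzeroLocus_iff {I : Ideal (PR K m)} (hI : IsHomogI I) {p : Pm K m} :
    p ∈ pzeroLocus I ↔ ∀ n, ∀ f ∈ I, f.IsHomogeneous n → eval p.rep f = 0 :=
  ⟨fun hp _ f hf _ ↦ eval_eq_zero_of_vanishesAt (hp f hf), fun h f hf n ↦
    h n _ (hI f hf n) (homogeneousComponent_isHomogeneous n f)⟩

theorem isSatI_idealOfSet (S : Set (Pm K m)) : IsSatI (idealOfSet S) := by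
  intro f hf
  rw [mem_idealOfSet]
  intro p hp n
  obtain ⟨i, hi⟩ := Function.ne_iff.1 p.rep_nonzero
  have h := mem_idealOfSet.1 (hf i) p hp (1 + n)
  rw [homogeneousComponent_mul_of_isHomogeneous (isHomogeneous_X K i), map_mul, eval_X] at h
  exact (mul_eq_zero.1 h).resolve_left hi

theorem IsSatI.inf {I J : Ideal (PR K m)} (hI : IsSatI I) (hJ : IsSatI J) : IsSatI (I ⊓ J) :=
  fun f hf ↦ ⟨hI f fun i ↦ (hf i).1, hJ f fun i ↦ (hf i).2⟩

theorem mem_resIdeal {I : Ideal (PR K m)} {f g : PR K m} : g ∈ resIdeal I f ↔ f * g ∈ I := by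
  rw [resIdeal, Ideal.span, Submodule.mem_colon_span_singleton, smul_eq_mul, mul_comm]

theorem le_resIdeal (I : Ideal (PR K m)) (f : PR K m) : I ≤ resIdeal I f :=
  fun _ hg ↦ mem_resIdeal.2 (I.mul_mem_left f hg)

theorem resIdeal_mono {I J : Ideal (PR K m)} (h : I ≤ J) (f : PR K m) :
    resIdeal I f ≤ resIdeal J f :=
  Submodule.colon_mono h subset_rfl

theorem IsSatI.resIdeal {I : Ideal (PR K m)} (hI : IsSatI I) (f : PR K m) :
    IsSatI (resIdeal I f) := fun g hg ↦
  mem_resIdeal.2 <| hI _ fun i ↦ by simpa only [mul_left_comm] using mem_resIdeal.1 (hg i)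

theorem IsHomogI.resIdeal {I : Ideal (PR K m)} (hI : IsHomogI I) {f : PR K m}
    (hf : f.IsHomogeneous t) : IsHomogI (resIdeal I f) := by
  intro g hg n
  rw [mem_resIdeal, ← homogeneousComponent_mul_of_isHomogeneous hf]
  exact hI _ (mem_resIdeal.1 hg) _

theorem IsHomogI.sup_span_singleton {I : Ideal (PR K m)} (hI : IsHomogI I) {f : PR K m}
    (hf : f.IsHomogeneous t) : IsHomogI (I ⊔ Ideal.span {f}) := fun _ hg n ↦
  homogeneousComponent_mem_of_mem (hI.isHomogeneous.sup <| Ideal.homogeneous_span _ _ fun _ hg ↦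
    ⟨t, Set.mem_singleton_iff.1 hg ▸ hf⟩) hg n

theorem IsHomogI.exists_isHomogeneous_sub_mul_mem {I : Ideal (PR K m)} (hI : IsHomogI I)
    {f g : PR K m} (hf : f.IsHomogeneous t) (hg : g.IsHomogeneous (t + k))
    (hgI : g ∈ I ⊔ Ideal.span {f}) : ∃ r : PR K m, r.IsHomogeneous k ∧ g - f * r ∈ I := by
  obtain ⟨r, a, ha, rfl⟩ := Ideal.mem_span_singleton_sup.1 (sup_comm I _ ▸ hgI)
  refine ⟨homogeneousComponent k r, homogeneousComponent_isHomogeneous k r, ?_⟩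
  rw [← homogeneousComponent_mul_of_isHomogeneous hf, ← homogeneousComponent_eq_self hg, ← map_sub,
    mul_comm r f, add_sub_cancel_left]
  exact hI a ha _

theorem IsHomogI.exists_pow_mul_mem_of_mem_satIdeal {J : Ideal (PR K m)} (hJ : IsHomogI J)
    {l g : PR K m} (hl : l.IsHomogeneous 1) (hg : g ∈ satIdeal J) : ∃ N : ℕ, l ^ N * g ∈ J := by
  let S := Localization.Away l
  let J' : Ideal (PR K m) := (J.map (algebraMap _ S)).comap (algebraMap _ S)
  have mem_J' {x : PR K m} : x ∈ J' ↔ ∃ N : ℕ, l ^ N * x ∈ J := by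
    rw [Ideal.mem_comap, IsLocalization.algebraMap_mem_map_algebraMap_iff (.powers l)]
    simp only [Submonoid.mem_powers_iff, exists_exists_eq_and]
  suffices h : IsHomogI J' ∧ IsSatI J' from
    mem_J'.1 ((sInf_le ⟨Ideal.le_comap_map, h⟩ : satIdeal J ≤ J') hg)
  constructor
  · intro x hx n
    obtain ⟨N, hN⟩ := mem_J'.1 hx
    refine mem_J'.2 ⟨N, ?_⟩
    rw [← homogeneousComponent_mul_of_isHomogeneous (hl.pow N)]
    exact hJ _ hN _
  · intro x hx
    have hlx : ∀ y ∈ homogeneousSubmodule (Fin (m + 1)) K 1, y * x ∈ J' := by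
      rw [homogeneousSubmodule_one_eq_span_X]
      intro y hy
      induction hy using Submodule.span_induction with
      | mem y hy => obtain ⟨i, rfl⟩ := hy; exact hx i
      | zero => rw [zero_mul]; exact J'.zero_mem
      | add y z _ _ hy hz => rw [add_mul]; exact J'.add_mem hy hz
      | smul c y _ hy => rw [smul_mul_assoc]; exact J'.smul_of_tower_mem c hy
    obtain ⟨N, hN⟩ := mem_J'.1 (hlx l hl)
    exact mem_J'.2 ⟨N + 1, by rwa [pow_succ, mul_assoc]⟩

theorem exists_X_notMem_of_mem_associatedPrimes {I p : Ideal (PR K m)} (hI : IsSatI I)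
    (hp : p ∈ associatedPrimes (PR K m) (PR K m ⧸ I)) : ∃ i, X i ∉ p := by
  by_contra! hX
  obtain ⟨hprime, z, hz⟩ := isAssociatedPrime_iff.1 (AssociatedPrimes.mem_iff.1 hp)
  obtain ⟨y, rfl⟩ := Ideal.Quotient.mk_surjective z
  have mem_p {x : PR K m} : x ∈ p ↔ x * y ∈ I := by
    rw [hz, Submodule.mem_colon_singleton, Submodule.mem_bot, ← Ideal.Quotient.eq_zero_iff_mem,
      map_mul]
    rfl
  exact hprime.ne_top <| (Ideal.eq_top_iff_one p).2 <| mem_p.2 <| hI _ fun i ↦ by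
    simpa only [one_mul] using mem_p.1 (hX i)

/-- The degree-`d` part `I_d` of an ideal, as a subspace of the space of degree-`d` forms. -/
def formsIn (I : Ideal (PR K m)) (d : ℕ) : Submodule K (Hd K m d) :=
  (I.restrictScalars K).comap (Hd K m d).subtype

theorem mem_formsIn {I : Ideal (PR K m)} {x : Hd K m d} : x ∈ formsIn I d ↔ (x : PR K m) ∈ I :=
  Iff.rfl

theorem formsIn_mono {I J : Ideal (PR K m)} (h : I ≤ J) (d : ℕ) : formsIn I d ≤ formsIn J d :=
  fun _ hx ↦ h hx

theorem exists_linearForm_isSMulRegular [Infinite K] {𝓘 : Set (Ideal (PR K m))} (hfin : 𝓘.Finite)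
    (hsat : ∀ I ∈ 𝓘, IsSatI I) :
    ∃ l : PR K m, l.IsHomogeneous 1 ∧ ∀ I ∈ 𝓘, IsSMulRegular (PR K m ⧸ I) l := by
  classical
  have hass : (⋃ I ∈ 𝓘, associatedPrimes (PR K m) (PR K m ⧸ I)).Finite :=
    hfin.biUnion fun I _ ↦ associatedPrimes.finite (PR K m) (PR K m ⧸ I)
  have htop : ⊤ ∉ hass.toFinset.image (formsIn · 1) := by
    simp only [Finset.mem_image, Set.Finite.mem_toFinset, Set.mem_iUnion, not_exists, not_and]
    rintro p ⟨I, hI, hp⟩ hp_top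
    obtain ⟨i, hi⟩ := exists_X_notMem_of_mem_associatedPrimes (hsat I hI) hp
    exact hi (hp_top ▸ Submodule.mem_top : (⟨X i, isHomogeneous_X K i⟩ : Hd K m 1) ∈ formsIn p 1)
  obtain ⟨l, hl⟩ :=
    (Set.ne_univ_iff_exists_notMem _).1 (Subspace.biUnion_ne_univ_of_top_notMem htop)
  refine ⟨l, l.2, fun I hI ↦ by_contra fun hreg ↦ hl ?_⟩
  obtain ⟨p, hp, hlp⟩ := Set.mem_iUnion₂.1
    ((biUnion_associatedPrimes_eq_compl_regular (PR K m) (PR K m ⧸ I)).ge hreg)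
  exact Set.mem_biUnion (Finset.mem_image_of_mem _ <|
    hass.mem_toFinset.2 <| Set.mem_biUnion hI hp) hlp

/-! ### Hilbert functions -/

instance finiteDimensional_Hd (d : ℕ) : FiniteDimensional K (Hd K m d) :=
  Module.Finite.iff_fg.2 (homogeneousSubmodule_fg _ _ d)

theorem hilbQ_eq_finrank_quotient (I : Ideal (PR K m)) (d : ℕ) :
    hilbQ I d = Module.finrank K (Hd K m d ⧸ formsIn I d) := by
  let π := (Ideal.Quotient.mkₐ K I).toLinearMap.domRestrict (Hd K m d)
  have hker : LinearMap.ker π = formsIn I d :=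
    Submodule.ext fun _ ↦ Ideal.Quotient.eq_zero_iff_mem
  rw [hilbQ, ← LinearMap.range_domRestrict, ← hker]
  exact π.quotKerEquivRange.finrank_eq.symm

theorem hilbQ_add_finrank_formsIn (I : Ideal (PR K m)) (d : ℕ) :
    hilbQ I d + Module.finrank K (formsIn I d) = Module.finrank K (Hd K m d) :=
  hilbQ_eq_finrank_quotient I d ▸ Submodule.finrank_quotient_add_finrank _

theorem hilbQ_inf_le (I J : Ideal (PR K m)) (d : ℕ) :
    hilbQ (I ⊓ J) d ≤ hilbQ I d + hilbQ J d := by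
  have hI := hilbQ_add_finrank_formsIn I d
  have hJ := hilbQ_add_finrank_formsIn J d
  have hIJ := hilbQ_add_finrank_formsIn (I ⊓ J) d
  have hinf : formsIn (I ⊓ J) d = formsIn I d ⊓ formsIn J d := rfl
  have hadd := Submodule.finrank_sup_add_finrank_inf_eq (formsIn I d) (formsIn J d)
  have hsup := Submodule.finrank_le (formsIn I d ⊔ formsIn J d)
  rw [← hinf] at hadd
  lia

theorem IsZeroDimI.inf {I J : Ideal (PR K m)} (hI : IsZeroDimI I) (hJ : IsZeroDimI J) :
    IsZeroDimI (I ⊓ J) := by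
  obtain ⟨a, ha⟩ := hI
  obtain ⟨b, hb⟩ := hJ
  exact ⟨a + b, fun d ↦ (hilbQ_inf_le I J d).trans (add_le_add (ha d) (hb d))⟩

theorem IsZeroDimI.mono {I J : Ideal (PR K m)} (hI : IsZeroDimI I) (h : I ≤ J) :
    IsZeroDimI J := by
  obtain ⟨a, ha⟩ := hI
  refine ⟨a, fun d ↦ le_trans ?_ (ha d)⟩
  have hle := Submodule.finrank_mono (formsIn_mono h d)
  have hI := hilbQ_add_finrank_formsIn I d
  have hJ := hilbQ_add_finrank_formsIn J d
  lia

/-- Multiplication by a form `f` of degree `t`, as a linear map on forms of degree `e`. -/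
def mulForm {f : PR K m} (hf : f.IsHomogeneous t) (e : ℕ) : Hd K m e →ₗ[K] Hd K m (t + e) :=
  (LinearMap.mulLeft K f).restrict fun _ hx ↦ hf.mul hx

theorem comap_mulForm_formsIn {f : PR K m} (hf : f.IsHomogeneous t) (I : Ideal (PR K m)) (e : ℕ) :
    (formsIn I (t + e)).comap (mulForm hf e) = formsIn (resIdeal I f) e :=
  Submodule.ext fun _ ↦ mem_resIdeal.symm

theorem resIdeal_eq_self_of_isSMulRegular {I : Ideal (PR K m)} {g : PR K m}
    (hg : IsSMulRegular (PR K m ⧸ I) g) : resIdeal I g = I :=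
  le_antisymm (fun _ hx ↦ mem_of_isSMulRegular_quotient_of_smul_mem hg (mem_resIdeal.1 hx))
    (le_resIdeal I g)

theorem exists_mapQ_mulForm_injective {I : Ideal (PR K m)} {g : PR K m} (hg : g.IsHomogeneous k)
    (hreg : IsSMulRegular (PR K m ⧸ I) g) (e : ℕ) :
    ∃ μ : (Hd K m e ⧸ formsIn I e) →ₗ[K] Hd K m (k + e) ⧸ formsIn I (k + e),
      Function.Injective μ ∧ μ ∘ₗ (formsIn I e).mkQ = (formsIn I (k + e)).mkQ ∘ₗ mulForm hg e := by
  have hcomap : (formsIn I (k + e)).comap (mulForm hg e) = formsIn I e := by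
    rw [comap_mulForm_formsIn, resIdeal_eq_self_of_isSMulRegular hreg]
  refine ⟨Submodule.mapQ _ _ (mulForm hg e) hcomap.ge, ?_, Submodule.mapQ_mkQ ..⟩
  rw [← LinearMap.ker_eq_bot, Submodule.ker_mapQ, hcomap, Submodule.mkQ_map_self]

theorem hilbQ_le_hilbQ_add {I : Ideal (PR K m)} {g : PR K m} (hg : g.IsHomogeneous k)
    (hreg : IsSMulRegular (PR K m ⧸ I) g) (e : ℕ) : hilbQ I e ≤ hilbQ I (k + e) := by
  obtain ⟨μ, hμ, -⟩ := exists_mapQ_mulForm_injective hg hreg e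
  simpa only [hilbQ_eq_finrank_quotient] using LinearMap.finrank_le_finrank_of_injective hμ

theorem exists_sub_mul_mem_of_hilbQ_le {I : Ideal (PR K m)} {g : PR K m} (hg : g.IsHomogeneous k)
    (hreg : IsSMulRegular (PR K m ⧸ I) g) (hle : hilbQ I (k + e) ≤ hilbQ I e)
    (y : Hd K m (k + e)) : ∃ x : Hd K m e, (y : PR K m) - g * x ∈ I := by
  obtain ⟨μ, hμ, hcomp⟩ := exists_mapQ_mulForm_injective hg hreg e
  have hrank := (hilbQ_le_hilbQ_add hg hreg e).antisymm hle
  rw [hilbQ_eq_finrank_quotient, hilbQ_eq_finrank_quotient] at hrank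
  obtain ⟨z, hz⟩ := (LinearMap.injective_iff_surjective_of_finrank_eq_finrank hrank).1 hμ
    ((formsIn I (k + e)).mkQ y)
  obtain ⟨x, rfl⟩ := Submodule.mkQ_surjective _ z
  have hyx : y - mulForm hg e x ∈ formsIn I (k + e) :=
    (Submodule.Quotient.eq _).1 (hz.symm.trans (LinearMap.congr_fun hcomp x))
  exact ⟨x, hyx⟩

theorem IsSatI.monotone_hilbQ [Infinite K] {I : Ideal (PR K m)} (hI : IsSatI I) :
    Monotone (hilbQ I) := by
  obtain ⟨l, hl, hreg⟩ := exists_linearForm_isSMulRegular (Set.finite_singleton I)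
    fun _ hJ ↦ Set.mem_singleton_iff.1 hJ ▸ hI
  exact monotone_nat_of_le_succ fun n ↦
    add_comm 1 n ▸ hilbQ_le_hilbQ_add hl (hreg I (Set.mem_singleton I)) n

theorem hilbQ_le_idealDeg [Infinite K] {I : Ideal (PR K m)} (hI : IsSatI I) (hI0 : IsZeroDimI I)
    (n : ℕ) : hilbQ I n ≤ idealDeg I :=
  Filter.le_limsup_of_frequently_le
    ((Filter.eventually_ge_atTop n).mono fun _ h ↦ hI.monotone_hilbQ h).frequently
    (Filter.isBoundedUnder_of hI0)

theorem exists_sub_mul_mem_of_h1I_eq_zero [Infinite K] {I : Ideal (PR K m)} (hI : IsSatI I)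
    (hI0 : IsZeroDimI I) (h1 : h1I I e = 0) {g : PR K m} (hg : g.IsHomogeneous k)
    (hreg : IsSMulRegular (PR K m ⧸ I) g) (y : Hd K m (k + e)) :
    ∃ x : Hd K m e, (y : PR K m) - g * x ∈ I :=
  exists_sub_mul_mem_of_hilbQ_le hg hreg
    ((hilbQ_le_idealDeg hI hI0 _).trans (Nat.sub_eq_zero_iff_le.1 h1)) y

/-! ### Forms separating points -/

theorem exists_linearForm_eval_eq_zero_eval_ne_zero {p q : Pm K m} (hpq : p ≠ q) :
    ∃ h : PR K m, h.IsHomogeneous 1 ∧ eval p.rep h = 0 ∧ eval q.rep h ≠ 0 := by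
  obtain ⟨i, hi⟩ := Function.ne_iff.1 p.rep_nonzero
  by_contra! H
  have hprop (j) : p.rep i * q.rep j = p.rep j * q.rep i := by
    have hminor := H (C (p.rep i) * X j - C (p.rep j) * X i)
      ((isHomogeneous_C_mul_X _ _).sub (isHomogeneous_C_mul_X _ _))
    simp only [map_sub, map_mul, eval_C, eval_X] at hminor
    exact sub_eq_zero.1 (hminor (by ring))
  have hq : q.rep = (q.rep i / p.rep i) • p.rep := by
    funext j
    rw [Pi.smul_apply, smul_eq_mul, div_mul_eq_mul_div, eq_div_iff hi, mul_comm, hprop j, mul_comm]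
  exact hpq <| p.mk_rep ▸ q.mk_rep ▸
    ((Projectivization.mk_eq_mk_iff' K _ _ q.rep_nonzero p.rep_nonzero).2 ⟨_, hq.symm⟩).symm

theorem exists_form_eval_eq_zero_eval_ne_zero {T : Finset (Pm K m)} {q : Pm K m} (hq : q ∉ T) :
    ∃ (k : ℕ) (h : PR K m), h.IsHomogeneous k ∧ (∀ p ∈ T, eval p.rep h = 0) ∧
      eval q.rep h ≠ 0 := by
  classical
  induction T using Finset.induction_on with
  | empty => exact ⟨0, 1, isHomogeneous_one _ _, by simp, by simp⟩
  | insert p T _ ih =>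
    rw [Finset.mem_insert, not_or] at hq
    obtain ⟨k, h, hh, hhT, hhq⟩ := ih hq.2
    obtain ⟨l, hl, hlp, hlq⟩ := exists_linearForm_eval_eq_zero_eval_ne_zero (Ne.symm hq.1)
    refine ⟨1 + k, l * h, hl.mul hh, ?_, map_mul (eval q.rep) l h ▸ mul_ne_zero hlq hhq⟩
    rw [Finset.forall_mem_insert]
    exact ⟨by rw [map_mul, hlp, zero_mul], fun p hp ↦ by rw [map_mul, hhT p hp, mul_zero]⟩

theorem eval_ne_zero_of_isSMulRegular {l : PR K m} (hl : l.IsHomogeneous n) {p : Pm K m}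
    (hreg : IsSMulRegular (PR K m ⧸ idealOfSet {p}) l) : eval p.rep l ≠ 0 := by
  intro h0
  have hl_mem : l • (1 : PR K m) ∈ idealOfSet {p} := by
    rw [smul_eq_mul, mul_one, mem_idealOfSet]
    rintro _ rfl
    exact (vanishesAt_iff_eval_eq_zero hl _).2 h0
  have h1 := mem_idealOfSet.1 (mem_of_isSMulRegular_quotient_of_smul_mem hreg hl_mem) p rfl
  exact one_ne_zero ((map_one (eval p.rep)).symm.trans (eval_eq_zero_of_vanishesAt h1))

theorem exists_linearForm_isSMulRegular_eval_ne_zero [Infinite K] {I J : Ideal (PR K m)}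
    (hI : IsSatI I) (hJ : IsSatI J) (T : Finset (Pm K m)) :
    ∃ l : PR K m, l.IsHomogeneous 1 ∧ IsSMulRegular (PR K m ⧸ I) l ∧
      IsSMulRegular (PR K m ⧸ J) l ∧ ∀ p ∈ T, eval p.rep l ≠ 0 := by
  obtain ⟨l, hl, hreg⟩ := exists_linearForm_isSMulRegular
    (𝓘 := insert I (insert J ((fun p ↦ idealOfSet {p}) '' T)))
    (((T.finite_toSet.image _).insert J).insert I) (by
      rintro _ (rfl | rfl | ⟨p, -, rfl⟩)
      exacts [hI, hJ, isSatI_idealOfSet _])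
  exact ⟨l, hl, hreg I (.inl rfl), hreg J (.inr (.inl rfl)), fun p hp ↦
    eval_ne_zero_of_isSMulRegular hl (hreg _ (.inr (.inr ⟨p, hp, rfl⟩)))⟩

theorem diff_subset_pzeroLocus_resIdeal {f : PR K m} (hf : f.IsHomogeneous t)
    (I : Ideal (PR K m)) :
    pzeroLocus I \ pzeroLocus (Ideal.span {f}) ⊆ pzeroLocus (resIdeal I f) := by
  rintro p ⟨hp, hpf⟩ g hg n
  have h := hp _ (mem_resIdeal.1 hg) (t + n)
  rw [homogeneousComponent_mul_of_isHomogeneous hf, map_mul] at h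
  exact (mul_eq_zero.1 h).resolve_left ((mem_pzeroLocus_span_singleton hf).not.1 hpf)

/-! ### Linear spans and contraction -/

theorem schemeSpanSub_antitone {I J : Ideal (PR K m)} (h : I ≤ J) (d : ℕ) :
    schemeSpanSub J d ≤ schemeSpanSub I d :=
  fun _ hφ x hx ↦ hφ x (h hx)

theorem dualSpan_mono {S T : Set (Pm K m)} (h : S ⊆ T) (d : ℕ) : dualSpan d S ≤ dualSpan d T :=
  Submodule.span_mono (Set.image_mono h)

theorem dualSpan_union (S T : Set (Pm K m)) (d : ℕ) :
    dualSpan d (S ∪ T) = dualSpan d S ⊔ dualSpan d T := by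
  rw [dualSpan, Set.image_union, Submodule.span_union, dualSpan, dualSpan]

theorem dualCoannihilator_dualSpan (S : Set (Pm K m)) (d : ℕ) :
    (dualSpan d S).dualCoannihilator = formsIn (idealOfSet S) d := by
  ext x
  rw [Submodule.mem_dualCoannihilator, mem_formsIn, mem_idealOfSet]
  refine ⟨fun h p hp ↦ (vanishesAt_iff_eval_eq_zero x.2 p).2 <|
    h _ (Submodule.subset_span ⟨p, hp, rfl⟩), fun h φ hφ ↦ ?_⟩
  have hle : dualSpan d S ≤ LinearMap.ker (Module.Dual.eval K (Hd K m d) x) := by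
    rw [dualSpan, Submodule.span_le]
    rintro _ ⟨p, hp, rfl⟩
    exact eval_eq_zero_of_vanishesAt (h p hp)
  exact hle hφ

theorem schemeSpanSub_eq_dualAnnihilator (I : Ideal (PR K m)) (d : ℕ) :
    schemeSpanSub I d = (formsIn I d).dualAnnihilator := by
  ext φ
  rw [Submodule.mem_dualAnnihilator]
  rfl

theorem schemeSpanSub_idealOfSet (S : Set (Pm K m)) (d : ℕ) :
    schemeSpanSub (idealOfSet S) d = dualSpan d S := by
  rw [schemeSpanSub_eq_dualAnnihilator, ← dualCoannihilator_dualSpan,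
    Subspace.dualCoannihilator_dualAnnihilator_eq]

theorem dualSpan_le_schemeSpanSub {I : Ideal (PR K m)} {S : Set (Pm K m)}
    (h : S ⊆ pzeroLocus I) (d : ℕ) : dualSpan d S ≤ schemeSpanSub I d :=
  schemeSpanSub_idealOfSet S d ▸ schemeSpanSub_antitone (le_idealOfSet_iff.2 h) d

/-- Contraction (the apolarity action) by a form `f` of degree `t`, the transpose of
multiplication by `f`. -/
def contract {f : PR K m} (hf : f.IsHomogeneous t) (e : ℕ) :
    Module.Dual K (Hd K m (t + e)) →ₗ[K] Module.Dual K (Hd K m e) :=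
  (mulForm hf e).dualMap

theorem contract_nu {f : PR K m} (hf : f.IsHomogeneous t) (e : ℕ) (v : Fin (m + 1) → K) :
    contract hf e (nu (t + e) v) = eval v f • nu e v :=
  LinearMap.ext fun x ↦ map_mul (aeval v) f (x : PR K m)

theorem contract_mem_schemeSpanSub {f : PR K m} (hf : f.IsHomogeneous t) {I : Ideal (PR K m)}
    {φ : Module.Dual K (Hd K m (t + e))} (hφ : φ ∈ schemeSpanSub I (t + e)) :
    contract hf e φ ∈ schemeSpanSub (resIdeal I f) e :=
  fun x hx ↦ hφ (mulForm hf e x) (mem_resIdeal.1 hx)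

theorem contract_eq_zero_of_mem_dualSpan {f : PR K m} (hf : f.IsHomogeneous t)
    {S : Set (Pm K m)} (hS : S ⊆ pzeroLocus (Ideal.span {f}))
    {φ : Module.Dual K (Hd K m (t + e))} (hφ : φ ∈ dualSpan (t + e) S) :
    contract hf e φ = 0 := by
  have hle : dualSpan (t + e) S ≤ LinearMap.ker (contract hf e) := by
    rw [dualSpan, Submodule.span_le]
    rintro _ ⟨p, hp, rfl⟩
    rw [SetLike.mem_coe, LinearMap.mem_ker, contract_nu,
      (mem_pzeroLocus_span_singleton hf).1 (hS hp), zero_smul]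
  exact hle hφ

/-! ### Residual schemes with `h^1 = 0` -/

theorem subset_pzeroLocus_of_sum_smul_nu_mem [Infinite K] {I J : Ideal (PR K m)} (hI : IsSatI I)
    (hI0 : IsZeroDimI I) (h1 : h1I I e = 0) (hJ : IsSatI J) (hJh : IsHomogI J) (hIJ : I ≤ J)
    {T : Finset (Pm K m)} (hT : ↑T ⊆ pzeroLocus I) {c : Pm K m → K} (hc : ∀ p ∈ T, c p ≠ 0)
    (hφ : ∑ p ∈ T, c p • nu e p.rep ∈ schemeSpanSub J e) : ↑T ⊆ pzeroLocus J := by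
  classical
  intro q hq
  obtain ⟨l, hl, hlI, hlJ, hlT⟩ := exists_linearForm_isSMulRegular_eval_ne_zero hI hJ T
  obtain ⟨k, h, hh, hhT, hhq⟩ := exists_form_eval_eq_zero_eval_ne_zero (Finset.notMem_erase q T)
  refine hJh.mem_pzeroLocus_iff.2 fun s u huJ hu ↦ ?_
  have hdeg : (l ^ e * (h * u)).IsHomogeneous (1 * (k + s) + e) := by
    simpa only [one_mul, add_comm] using (hl.pow e).mul (hh.mul hu)
  -- `x` has degree `e`, lies in `J` along with `u`, and vanishes on `T` except possibly at `q`, so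
  -- the given functional reads off `c q * x(q)`.
  obtain ⟨x, hx⟩ := exists_sub_mul_mem_of_h1I_eq_zero hI hI0 h1 (hl.pow (k + s)) (hlI.pow (k + s))
    ⟨_, hdeg⟩
  have hxJ : (x : PR K m) ∈ J := by
    refine mem_of_isSMulRegular_quotient_of_smul_mem (hlJ.pow (k + s)) ?_
    have hsub := J.sub_mem (J.mul_mem_left (l ^ e) (J.mul_mem_left h huJ)) (hIJ hx)
    rwa [sub_sub_cancel] at hsub
  have hxT {p : Pm K m} (hp : p ∈ T) : eval p.rep l ^ e * (eval p.rep h * eval p.rep u) =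
      eval p.rep l ^ (k + s) * eval p.rep (x : PR K m) := by
    simpa only [map_sub, map_mul, map_pow, sub_eq_zero] using
      eval_eq_zero_of_vanishesAt (hT hp _ hx)
  have hxT_erase (p) (hp : p ∈ T) (hpq : p ≠ q) : eval p.rep (x : PR K m) = 0 := by
    have h0 := hxT hp
    rw [hhT p (Finset.mem_erase.2 ⟨hpq, hp⟩), zero_mul, mul_zero] at h0
    exact (mul_eq_zero.1 h0.symm).resolve_left (pow_ne_zero _ (hlT p hp))
  have hsum : ∑ p ∈ T, c p * eval p.rep (x : PR K m) = 0 :=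
    (LinearMap.sum_apply ..).symm.trans (hφ x hxJ)
  rw [Finset.sum_eq_single_of_mem q hq fun p hp hpq ↦ by rw [hxT_erase p hp hpq, mul_zero]] at hsum
  have hxq := hxT hq
  rw [(mul_eq_zero.1 hsum).resolve_left (hc q hq), mul_zero] at hxq
  have hhu := (mul_eq_zero.1 hxq).resolve_left (pow_ne_zero _ (hlT q hq))
  exact (mul_eq_zero.1 hhu).resolve_left hhq

theorem mem_dualSpan_inter_pzeroLocus_of_contract_mem [Infinite K] {I J : Ideal (PR K m)}
    (hI : IsSatI I) (hI0 : IsZeroDimI I) (h1 : h1I I e = 0) (hJ : IsSatI J) (hJh : IsHomogI J)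
    (hIJ : I ≤ J) {f : PR K m} (hf : f.IsHomogeneous t) {S : Set (Pm K m)}
    (hS : S ⊆ pzeroLocus I \ pzeroLocus (Ideal.span {f})) {ψ : Module.Dual K (Hd K m (t + e))}
    (hψ : ψ ∈ dualSpan (t + e) S) (hψJ : contract hf e ψ ∈ schemeSpanSub J e) :
    ψ ∈ dualSpan (t + e) (S ∩ pzeroLocus J) := by
  rw [dualSpan, Finsupp.mem_span_image_iff_linearCombination] at hψ ⊢
  obtain ⟨c, hcS, rfl⟩ := hψ
  refine ⟨c, fun p hp ↦ ⟨hcS hp, ?_⟩, rfl⟩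
  have hcontract : contract hf e (Finsupp.linearCombination K (fun p ↦ nu (t + e) p.rep) c) =
      ∑ p ∈ c.support, (c p * eval p.rep f) • nu e p.rep := by
    simp only [Finsupp.linearCombination_apply, Finsupp.sum, map_sum, map_smul, contract_nu,
      smul_smul]
  refine subset_pzeroLocus_of_sum_smul_nu_mem hI hI0 h1 hJ hJh hIJ (fun p hp ↦ (hS (hcS hp)).1)
    (fun p hp ↦ mul_ne_zero (Finsupp.mem_support_iff.1 hp) ?_) (hcontract ▸ hψJ) hp
  exact (mem_pzeroLocus_span_singleton hf).not.1 (hS (hcS hp)).2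

theorem exists_sub_mul_mem_of_mem_satIdeal [Infinite K] {I J : Ideal (PR K m)} {f : PR K m}
    (hf : f.IsHomogeneous t) (hI : IsSatI I) (hI0 : IsZeroDimI I) (h1 : h1I I e = 0)
    (hJ : IsSatI J) (hJh : IsHomogI J) (hIJ : I ≤ resIdeal J f) {z : Hd K m (t + e)}
    (hz : (z : PR K m) ∈ satIdeal (J ⊔ Ideal.span {f})) :
    ∃ x : Hd K m e, (z : PR K m) - f * x ∈ J := by
  obtain ⟨l, hl, hlI, hlJ, -⟩ := exists_linearForm_isSMulRegular_eval_ne_zero hI hJ ∅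
  obtain ⟨N, hN⟩ := (hJh.sup_span_singleton hf).exists_pow_mul_mem_of_mem_satIdeal hl hz
  have hdeg : (l ^ N * (z : PR K m)).IsHomogeneous (t + (1 * N + e)) :=
    add_left_comm (1 * N) t e ▸ (hl.pow N).mul z.2
  obtain ⟨r, hr, hrJ⟩ := hJh.exists_isHomogeneous_sub_mul_mem hf hdeg hN
  obtain ⟨x, hx⟩ := exists_sub_mul_mem_of_h1I_eq_zero hI hI0 h1 (hl.pow N) (hlI.pow N) ⟨r, hr⟩
  refine ⟨x, mem_of_isSMulRegular_quotient_of_smul_mem (hlJ.pow N) ?_⟩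
  have hsplit : l ^ N • ((z : PR K m) - f * x) = (l ^ N * z - f * r) + f * (r - l ^ N * x) := by
    rw [smul_eq_mul]
    ring
  exact hsplit ▸ J.add_mem hrJ (mem_resIdeal.1 (hIJ hx))

theorem mem_schemeSpanSub_satIdeal_of_contract_eq_zero [Infinite K] {I J : Ideal (PR K m)}
    {f : PR K m} (hf : f.IsHomogeneous t) (hI : IsSatI I) (hI0 : IsZeroDimI I) (h1 : h1I I e = 0)
    (hJ : IsSatI J) (hJh : IsHomogI J) (hIJ : I ≤ resIdeal J f)
    {φ : Module.Dual K (Hd K m (t + e))} (hφ : φ ∈ schemeSpanSub J (t + e))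
    (hφf : contract hf e φ = 0) : φ ∈ schemeSpanSub (satIdeal (J ⊔ Ideal.span {f})) (t + e) := by
  intro z hz
  obtain ⟨x, hx⟩ := exists_sub_mul_mem_of_mem_satIdeal hf hI hI0 h1 hJ hJh hIJ hz
  calc φ z = φ (z - mulForm hf e x) + contract hf e φ x := by
        rw [map_sub]; exact (sub_add_cancel _ _).symm
    _ = 0 := by rw [hφ (z - mulForm hf e x) hx, hφf, LinearMap.zero_apply, add_zero]

theorem exists_sub_mem_schemeSpanSub_satIdeal [Infinite K] {A B : PSub K m} (hA0 : IsZeroDimI A.I)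
    (hB0 : IsZeroDimI B.I) (hBred : IsReducedI B.I) {f : PR K m} (hf : f.IsHomogeneous t)
    (hres : h1I (resIdeal (A.I ⊓ B.I) f) e = 0) {φ : Module.Dual K (Hd K m (t + e))}
    (hφA : φ ∈ schemeSpanSub A.I (t + e)) (hφB : φ ∈ schemeSpanSub B.I (t + e)) :
    ∃ ψ ∈ dualSpan (t + e) ((pzeroLocus B.I \ pzeroLocus (Ideal.span {f})) ∩ pzeroLocus A.I),
      φ - ψ ∈ schemeSpanSub (satIdeal (A.I ⊔ Ideal.span {f})) (t + e) ⊓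
        schemeSpanSub (satIdeal (B.I ⊔ Ideal.span {f})) (t + e) := by
  set E := pzeroLocus B.I \ pzeroLocus (Ideal.span {f})
  set R := resIdeal (A.I ⊓ B.I) f
  have hR : IsSatI R := (A.sat.inf B.sat).resIdeal f
  have hR0 : IsZeroDimI R := (hA0.inf hB0).mono (le_resIdeal _ f)
  have hRA : R ≤ resIdeal A.I f := resIdeal_mono inf_le_left f
  have hRB : R ≤ resIdeal B.I f := resIdeal_mono inf_le_right f
  have hφS : φ ∈ dualSpan (t + e) (E ∪ pzeroLocus B.I ∩ pzeroLocus (Ideal.span {f})) := by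
    rw [Set.sdiff_union_inter, ← schemeSpanSub_idealOfSet]
    exact hBred ▸ hφB
  rw [dualSpan_union, Submodule.mem_sup] at hφS
  obtain ⟨ψ, hψ, χ, hχ, rfl⟩ := hφS
  have hχf : contract hf e χ = 0 := contract_eq_zero_of_mem_dualSpan hf Set.inter_subset_right hχ
  have hψA : ψ ∈ dualSpan (t + e) (E ∩ pzeroLocus A.I) := by
    refine dualSpan_mono (Set.inter_subset_inter_right E (pzeroLocus_antitone (le_resIdeal A.I f)))
      _ (mem_dualSpan_inter_pzeroLocus_of_contract_mem hR hR0 hres (A.sat.resIdeal f)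
        (A.homog.resIdeal hf) hRA hf (fun p hp ↦ ⟨?_, hp.2⟩) hψ ?_)
    · exact pzeroLocus_antitone hRB (diff_subset_pzeroLocus_resIdeal hf B.I hp)
    · simpa only [map_add, hχf, add_zero] using contract_mem_schemeSpanSub hf hφA
  refine ⟨ψ, hψA, ?_⟩
  rw [add_sub_cancel_left]
  have hχA : χ ∈ schemeSpanSub A.I (t + e) :=
    (Submodule.add_mem_iff_right _ (dualSpan_le_schemeSpanSub Set.inter_subset_right _ hψA)).1 hφA
  have hχB : χ ∈ schemeSpanSub B.I (t + e) :=
    dualSpan_le_schemeSpanSub Set.inter_subset_left _ hχ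
  exact ⟨mem_schemeSpanSub_satIdeal_of_contract_eq_zero hf hR hR0 hres A.sat A.homog hRA hχA hχf,
    mem_schemeSpanSub_satIdeal_of_contract_eq_zero hf hR hR0 hres B.sat B.homog hRB hχB hχf⟩

theorem PSub.eq_idealOfSet_of_inSpanSet {A : PSub K m} {P : PN K m d}
    (hA : ∀ A' : PSub K m, A.I < A'.I → ¬ inSpanI A'.I d P) {S : Set (Pm K m)}
    (hS : S ⊆ pzeroLocus A.I) (hP : inSpanSet d S P) : A.I = idealOfSet S :=
  (le_idealOfSet_iff.2 hS).eq_or_lt.resolve_right fun hlt ↦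
    hA ⟨idealOfSet S, isHomogI_idealOfSet S, isSatI_idealOfSet S⟩ hlt
      ((schemeSpanSub_idealOfSet S d).ge hP)

end Projective

theorem stmt7_general {K : Type} [Field K] [Infinite K] {m d t : ℕ} {P : PN K m d}
    {A B : PSub K m} (hA0 : IsZeroDimI A.I) (hB0 : IsZeroDimI B.I) (hAB : A.I ≠ B.I)
    (hPA : inSpanI A.I d P) (hPB : inSpanI B.I d P)
    (hA : ∀ A' : PSub K m, A.I < A'.I → ¬ inSpanI A'.I d P)
    (hB : ∀ B' : PSub K m, B.I < B'.I → ¬ inSpanI B'.I d P)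
    (hBred : IsReducedI B.I) (htd : t ≤ d) {f : PR K m} (hf : f.IsHomogeneous t)
    (hres : h1I (resIdeal (A.I ⊓ B.I) f) (d - t) = 0) :
    (schemeSpanSub (satIdeal (A.I ⊔ Ideal.span {f})) d ⊓
        schemeSpanSub (satIdeal (B.I ⊔ Ideal.span {f})) d ≠ ⊥) ∧
    ∃ Q : PN K m d,
      Q.rep ∈ schemeSpanSub (satIdeal (A.I ⊔ Ideal.span {f})) d ⊓
          schemeSpanSub (satIdeal (B.I ⊔ Ideal.span {f})) d ∧
      P.rep ∈ Submodule.span K (insert Q.rep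
        ((fun a => nu d a.rep) '' (pzeroLocus B.I \ pzeroLocus (Ideal.span {f})))) := by
  obtain ⟨e, rfl⟩ := Nat.exists_eq_add_of_le htd
  rw [Nat.add_sub_cancel_left] at hres
  obtain ⟨ψ, hψ, hχ⟩ := exists_sub_mem_schemeSpanSub_satIdeal hA0 hB0 hBred hf hres hPA hPB
  have hχ0 : P.rep - ψ ≠ 0 := fun h0 ↦ by
    rw [← sub_eq_zero.1 h0] at hψ
    exact hAB <| (PSub.eq_idealOfSet_of_inSpanSet hA Set.inter_subset_right hψ).trans
      (PSub.eq_idealOfSet_of_inSpanSet hB (Set.inter_subset_left.trans Set.sdiff_subset) hψ).symm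
  let Q : PN K m (t + e) := .mk K (P.rep - ψ) hχ0
  have hQ : Submodule.span K {Q.rep} = Submodule.span K {P.rep - ψ} := by
    rw [← Q.submodule_eq, Projectivization.submodule_mk]
  refine ⟨(Submodule.ne_bot_iff _).2 ⟨_, hχ, hχ0⟩, Q, ?_, ?_⟩
  · exact (Submodule.span_singleton_le_iff_mem _ _).2 hχ (hQ ▸ Submodule.mem_span_singleton_self _)
  · rw [Submodule.span_insert, hQ]
    exact Submodule.mem_sup.2 ⟨_, Submodule.mem_span_singleton_self _, ψ,
      dualSpan_mono Set.inter_subset_left _ hψ, sub_add_cancel _ _⟩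

/-- Remark (`v4.0`), Claim: in the setting of Lemma `v4`,
`⟨ν_d(A ∩ D)⟩ ∩ ⟨ν_d(B ∩ D)⟩ ≠ ∅` and there is a point `Q` in it with
`P ∈ ⟨{Q} ∪ ν_d(E)⟩`. -/
theorem stmt7 (K : Type) [Field K] [IsAlgClosed K] [CharZero K]
    (m d t : ℕ) (P : PN K m d)
    (A B : PSub K m) (hA0 : IsZeroDimI A.I) (hB0 : IsZeroDimI B.I) (hAB : A.I ≠ B.I)
    (hPA : inSpanI A.I d P) (hPB : inSpanI B.I d P)
    (hA : ∀ A' : PSub K m, A.I < A'.I → ¬ inSpanI A'.I d P)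
    (hB : ∀ B' : PSub K m, B.I < B'.I → ¬ inSpanI B'.I d P)
    (hBred : IsReducedI B.I)
    (ht : 0 < t) (htd : t ≤ d) (f : PR K m) (hf : f.IsHomogeneous t) (hf0 : f ≠ 0)
    (hres : h1I (resIdeal (A.I ⊓ B.I) f) (d - t) = 0) :
    (schemeSpanSub (satIdeal (A.I ⊔ Ideal.span {f})) d ⊓
        schemeSpanSub (satIdeal (B.I ⊔ Ideal.span {f})) d ≠ ⊥) ∧
    ∃ Q : PN K m d,
      Q.rep ∈ schemeSpanSub (satIdeal (A.I ⊔ Ideal.span {f})) d ⊓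
          schemeSpanSub (satIdeal (B.I ⊔ Ideal.span {f})) d ∧
      P.rep ∈ Submodule.span K (insert Q.rep
        ((fun a => nu d a.rep) '' (pzeroLocus B.I \ pzeroLocus (Ideal.span {f})))) :=
  stmt7_general hA0 hB0 hAB hPA hPB hA hB hBred htd hf hres
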